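/- Let a0 ∈ ℝ^k and λ > 0. The function φ̂ : ℝ^k → ℝ is continuously differentiable, with gradient ∇φ̂(a) = −ι* Č_{a0} S_λ((Č_{a0})* ι a) for every a ∈ ℝ^k; moreover this gradient map is Lipschitz continuous with Lipschitz constant ‖Č_{a0}‖_op² (operator norm). -/

import Mathlib

open scoped BigOperators Matrix

attribute [local instance 10] Classical.propDecidable

noncomputable section

/-- The index `t mod m` as an element of `Fin m`. -/
def idx (m : ℕ) [NeZero m] (t : ℤ) : Fin m :=
  ⟨(t % (m : ℤ)).toNat, by
    have hm : 0 < m := Nat.pos_of_ne_zero (NeZero.ne m)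
    have hm' : (0 : ℤ) < (m : ℤ) := by exact_mod_cast hm
    have h1 : 0 ≤ t % (m : ℤ) := Int.emod_nonneg t (ne_of_gt hm')
    have h2 : t % (m : ℤ) < (m : ℤ) := Int.emod_lt_of_pos t hm'
    omega⟩

/-- Cyclic shift: `(cshift τ v) i = v ((i - τ) mod m)`. -/
def cshift {m : ℕ} [NeZero m] (τ : ℤ) (v : Fin m → ℝ) : Fin m → ℝ :=
  fun i => v (idx m ((i : ℤ) - τ))

/-- Zero padding `ι : ℝ^k → ℝ^m`. -/
def pad (k m : ℕ) (a : Fin k → ℝ) : Fin m → ℝ :=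
  fun i => if h : (i : ℕ) < k then a ⟨i, h⟩ else 0

/-- Restriction to the first `k` coordinates, `ι* : ℝ^m → ℝ^k`. -/
def unpad {k m : ℕ} (h : k ≤ m) (v : Fin m → ℝ) : Fin k → ℝ :=
  fun j => v (Fin.castLE h j)

/-- Circulant matrix `C_w` whose `j`-th column is `s_j[w]`. -/
def circ {m : ℕ} [NeZero m] (w : Fin m → ℝ) : Matrix (Fin m) (Fin m) ℝ :=
  Matrix.of fun i j => cshift (j : ℤ) w i

/-- Reversed circulant matrix `Č_{a0}` whose `j`-th column is `s_{-j}[ι a0]`. -/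
def rcirc (k m : ℕ) [NeZero m] (a0 : Fin k → ℝ) : Matrix (Fin m) (Fin m) ℝ :=
  Matrix.of fun i j => cshift (-(j : ℤ)) (pad k m a0) i

/-- Circular convolution `w ⊛ x = C_w x`. -/
def conv {m : ℕ} [NeZero m] (w x : Fin m → ℝ) : Fin m → ℝ := (circ w).mulVec x

def dotp {α : Type*} [Fintype α] (u v : α → ℝ) : ℝ := ∑ i, u i * v i

def l2sq {α : Type*} [Fintype α] (v : α → ℝ) : ℝ := ∑ i, v i ^ 2

def l2norm {α : Type*} [Fintype α] (v : α → ℝ) : ℝ := Real.sqrt (l2sq v)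

def l1norm {α : Type*} [Fintype α] (v : α → ℝ) : ℝ := ∑ i, |v i|

/-- Scalar soft-thresholding. -/
def soft (lam t : ℝ) : ℝ := Real.sign t * max (|t| - lam) 0

/-- Entrywise soft-thresholding `S_λ`. -/
def softvec {m : ℕ} (lam : ℝ) (u : Fin m → ℝ) : Fin m → ℝ := fun i => soft lam (u i)

/-- The shift truncation `ι* s_{-τ}[ι a0] ∈ ℝ^k`. -/
def shiftTrunc {k m : ℕ} [NeZero m] (h : k ≤ m) (a0 : Fin k → ℝ) (τ : Fin m) : Fin k → ℝ :=
  unpad h (cshift (-(τ : ℤ)) (pad k m a0))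

/-- The inner objective of the simplified marginal problem. -/
def phiHatInner (k m : ℕ) [NeZero m] (lam : ℝ) (a0 a : Fin k → ℝ) (x : Fin m → ℝ) : ℝ :=
  l2sq (pad k m a0) / 2 + l2sq x / 2 - dotp (conv (pad k m a) x) (pad k m a0) + lam * l1norm x

/-- The simplified marginal objective `φ̂`. -/
def phiHat (k m : ℕ) [NeZero m] (lam : ℝ) (a0 a : Fin k → ℝ) : ℝ :=
  sInf (Set.range (phiHatInner k m lam a0 a))

/-- Zero-padding `ι` as an `m × k` matrix. -/
def padM (k m : ℕ) : Matrix (Fin m) (Fin k) ℝ :=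
  Matrix.of fun i j => if (i : ℕ) = (j : ℕ) then 1 else 0

/-- The diagonal 0/1 projection matrix `P_I`. -/
def projM {m : ℕ} (I : Set (Fin m)) : Matrix (Fin m) (Fin m) ℝ :=
  Matrix.of fun i j => if i = j ∧ i ∈ I then 1 else 0

/-- The `ℓ² → ℓ²` operator norm of a matrix. -/
def opNorm {α β : Type*} [Fintype α] [Fintype β] (A : Matrix α β ℝ) : ℝ :=
  sSup {c | ∃ v : β → ℝ, l2norm v = 1 ∧ c = l2norm (A.mulVec v)}

/-- The `ℓ² → ℓ∞` operator norm of a matrix. -/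
def l2linfNorm {α β : Type*} [Fintype α] [Fintype β] (A : Matrix α β ℝ) : ℝ :=
  sSup {c | ∃ v : β → ℝ, l2norm v = 1 ∧ c = sSup {d | ∃ i, d = |A.mulVec v i|}}

/-- The smallest eigenvalue of a symmetric matrix, via the Rayleigh quotient. -/
def lamMin {n : ℕ} (A : Matrix (Fin n) (Fin n) ℝ) : ℝ :=
  sInf {c | ∃ v : Fin n → ℝ, l2sq v = 1 ∧ c = dotp v (A.mulVec v)}

/-- `‖v‖_p^p = ∑ |v i|^p` for a real exponent `p`. -/
def lpPow {α : Type*} [Fintype α] (p : ℝ) (v : α → ℝ) : ℝ := ∑ i, |v i| ^ p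

/-- The `ℓ^p` norm with real exponent `p`. -/
def lpNorm {α : Type*} [Fintype α] (p : ℝ) (v : α → ℝ) : ℝ := (lpPow p v) ^ (1 / p)

/-- The continuous linear functional `v ↦ ⟨g, v⟩` on `ℝ^n`. -/
def dotCLM {n : ℕ} (g : Fin n → ℝ) : (Fin n → ℝ) →L[ℝ] ℝ :=
  LinearMap.toContinuousLinearMap
    { toFun := fun v => dotp g v
      map_add' := fun x y => by
        simp [dotp, mul_add, Finset.sum_add_distrib]
      map_smul' := fun c x => by
        simp only [dotp, Pi.smul_apply, smul_eq_mul, RingHom.id_apply, Finset.mul_sum]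
        exact Finset.sum_congr rfl fun i _ => by ring }

/-!
For fixed `a`, moving the circular convolution to the other side of the inner product turns the
inner problem into `min_x ½‖x‖² - ⟨x, B a⟩ + λ‖x‖₁` with `B = (Č_{a0})* ι`. It is separable; its
minimizer is `S_λ(B a)` and its value `-½‖S_λ(B a)‖²`, so `φ̂ = ½‖ι a0‖² - ½‖S_λ ∘ B‖²`.

Everything about `S_λ` follows from one fact: the residual `u - S_λ(u)` is a subgradient of `λ|·|`
at `S_λ(u)`. It makes `S_λ` firmly nonexpansive, and it makes `S_λ(u)` a subgradient of `½ S_λ²`,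
which together with nonexpansiveness leaves a quadratic remainder, so `½ S_λ²` has derivative
`S_λ`. The chain rule then gives `∇φ̂ = -B* S_λ(B ·)`, with Lipschitz constant
`‖B‖² ≤ ‖Č_{a0}‖²` as `ι` is an isometry.
-/

section SoftThreshold

variable {lam : ℝ}

lemma abs_sub_soft_le (hlam : 0 ≤ lam) (t : ℝ) : |t - soft lam t| ≤ lam := by
  rw [soft, abs_le]
  rcases lt_trichotomy t 0 with ht | rfl | ht
  · rw [Real.sign_of_neg ht, abs_of_neg ht]
    constructor <;> cases max_cases (-t - lam) 0 <;> linarith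
  · simpa using hlam
  · rw [Real.sign_of_pos ht, abs_of_pos ht]
    constructor <;> cases max_cases (t - lam) 0 <;> linarith

lemma sub_soft_mul_le (hlam : 0 ≤ lam) (t x : ℝ) : (t - soft lam t) * x ≤ lam * |x| :=
  calc (t - soft lam t) * x ≤ |t - soft lam t| * |x| := (le_abs_self _).trans_eq (abs_mul _ _)
    _ ≤ lam * |x| := mul_le_mul_of_nonneg_right (abs_sub_soft_le hlam t) (abs_nonneg x)

lemma sub_soft_mul_soft (lam t : ℝ) :
    (t - soft lam t) * soft lam t = lam * |soft lam t| := by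
  rcases le_total |t| lam with hle | hle
  · simp [soft, max_eq_right (sub_nonpos.2 hle)]
  · rw [soft, max_eq_left (sub_nonneg.2 hle)]
    rcases lt_trichotomy t 0 with ht | rfl | ht
    · rw [abs_of_neg ht] at hle
      rw [Real.sign_of_neg ht, abs_of_neg ht, abs_of_nonpos (by linarith)]
      ring
    · simp
    · rw [abs_of_pos ht] at hle
      rw [Real.sign_of_pos ht, abs_of_pos ht, abs_of_nonneg (by linarith)]
      ring

lemma neg_half_sq_soft_le (hlam : 0 ≤ lam) (t x : ℝ) :
    -(soft lam t ^ 2 / 2) ≤ x ^ 2 / 2 - x * t + lam * |x| := by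
  linarith [sub_soft_mul_le hlam t x, sq_nonneg (x - soft lam t)]

lemma half_sq_soft_sub_add_eq (lam t : ℝ) :
    soft lam t ^ 2 / 2 - soft lam t * t + lam * |soft lam t| = -(soft lam t ^ 2 / 2) := by
  linarith [sub_soft_mul_soft lam t]

lemma sq_soft_sub_soft_le (hlam : 0 ≤ lam) (s t : ℝ) :
    (soft lam s - soft lam t) ^ 2 ≤ (soft lam s - soft lam t) * (s - t) := by
  linarith [sub_soft_mul_le hlam s (soft lam t), sub_soft_mul_le hlam t (soft lam s),
    sub_soft_mul_soft lam s, sub_soft_mul_soft lam t]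

lemma soft_sub_soft_mul_sub_le (hlam : 0 ≤ lam) (s t : ℝ) :
    (soft lam s - soft lam t) * (s - t) ≤ (s - t) ^ 2 := by
  linarith [sq_soft_sub_soft_le hlam s t, sq_nonneg (soft lam s - soft lam t - (s - t))]

lemma abs_soft_sub_soft_le (hlam : 0 ≤ lam) (s t : ℝ) : |soft lam s - soft lam t| ≤ |s - t| :=
  sq_le_sq.1 ((sq_soft_sub_soft_le hlam s t).trans (soft_sub_soft_mul_sub_le hlam s t))

lemma continuous_soft (hlam : 0 ≤ lam) : Continuous (soft lam) :=
  (LipschitzWith.mk_one fun s t => abs_soft_sub_soft_le hlam s t).continuous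

lemma soft_mul_sub_le (hlam : 0 ≤ lam) (s t : ℝ) :
    soft lam s * (t - s) ≤ soft lam t ^ 2 / 2 - soft lam s ^ 2 / 2 := by
  linarith [neg_half_sq_soft_le hlam t (soft lam s), sub_soft_mul_soft lam s]

lemma hasDerivAt_of_abs_sub_le_sq {f : ℝ → ℝ} {f' t C : ℝ}
    (h : ∀ s, |f s - f t - f' * (s - t)| ≤ C * (s - t) ^ 2) : HasDerivAt f f' t := by
  have hO : (fun s => f s - f t - f' * (s - t)) =O[nhds t] fun s => ‖s - t‖ ^ 2 :=
    .of_bound C (.of_forall fun s => by simpa using h s)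
  have hremainder := (hO.hasFDerivAt one_lt_two).hasDerivAt
  have hlinear := ((hasDerivAt_id t).sub_const t).const_mul f'
  simpa [Function.comp_def] using (hremainder.add hlinear).add_const (f t)

lemma hasDerivAt_half_sq_soft (hlam : 0 ≤ lam) (t : ℝ) :
    HasDerivAt (fun s => soft lam s ^ 2 / 2) (soft lam t) t := by
  refine hasDerivAt_of_abs_sub_le_sq (C := 1) fun s => ?_
  have hlower := soft_mul_sub_le hlam t s
  have hupper := soft_mul_sub_le hlam s t
  have hgap := soft_sub_soft_mul_sub_le hlam s t
  rw [abs_of_nonneg (by linarith)]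
  linarith

end SoftThreshold

section Gradient

variable {n k : ℕ}

lemma dotCLM_apply (g v : Fin n → ℝ) : dotCLM g v = g ⬝ᵥ v := rfl

lemma dotCLM_neg (g : Fin n → ℝ) : dotCLM (-g) = -dotCLM g := by
  ext v
  simp [dotCLM_apply]

lemma continuous_dotCLM : Continuous (dotCLM : (Fin n → ℝ) → (Fin n → ℝ) →L[ℝ] ℝ) := by
  refine continuous_clm_apply.2 fun v => ?_
  simp only [dotCLM_apply]
  fun_prop

lemma contDiff_one_of_hasFDerivAt_dotCLM {f : (Fin n → ℝ) → ℝ} {g : (Fin n → ℝ) → Fin n → ℝ}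
    (hg : Continuous g) (hf : ∀ a, HasFDerivAt f (dotCLM (g a)) a) : ContDiff ℝ 1 f :=
  contDiff_one_iff_hasFDerivAt.2 ⟨_, continuous_dotCLM.comp hg, hf⟩

lemma hasFDerivAt_comp_mulVec {f : (Fin n → ℝ) → ℝ} {g : Fin n → ℝ}
    (B : Matrix (Fin n) (Fin k) ℝ) {a : Fin k → ℝ} (hf : HasFDerivAt f (dotCLM g) (B *ᵥ a)) :
    HasFDerivAt (fun b => f (B *ᵥ b)) (dotCLM (Bᵀ *ᵥ g)) a := by
  refine (hf.comp a B.mulVecLin.toContinuousLinearMap.hasFDerivAt).congr_fderiv ?_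
  ext v
  simp [dotCLM_apply, Matrix.dotProduct_mulVec, Matrix.mulVec_transpose]

end Gradient

section EuclideanNorm

open scoped Matrix.Norms.L2Operator

variable {α β γ : Type*} [Fintype α] [Fintype β] [Fintype γ]

lemma l2norm_eq_norm_toLp (v : α → ℝ) : l2norm v = ‖WithLp.toLp 2 v‖ := by
  simp [l2norm, l2sq, EuclideanSpace.norm_eq]

lemma l2norm_sub_comm (u v : α → ℝ) : l2norm (u - v) = l2norm (v - u) := by
  simp only [l2norm_eq_norm_toLp, WithLp.toLp_sub, norm_sub_rev]

lemma opNorm_eq_norm [DecidableEq β] (A : Matrix α β ℝ) : opNorm A = ‖A‖ := by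
  rw [Matrix.l2_opNorm_def, ← ContinuousLinearMap.sSup_sphere_eq_norm, opNorm]
  congr 1
  ext c
  constructor
  · rintro ⟨v, hv, rfl⟩
    refine ⟨WithLp.toLp 2 v, by simpa [l2norm_eq_norm_toLp] using hv, ?_⟩
    rw [l2norm_eq_norm_toLp]
    rfl
  · rintro ⟨x, hx, rfl⟩
    refine ⟨x.ofLp, by simpa [l2norm_eq_norm_toLp] using hx, ?_⟩
    rw [l2norm_eq_norm_toLp]
    rfl

lemma opNorm_nonneg (A : Matrix α β ℝ) : 0 ≤ opNorm A :=
  opNorm_eq_norm A ▸ norm_nonneg A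

lemma opNorm_transpose (A : Matrix α β ℝ) : opNorm Aᵀ = opNorm A := by
  rw [opNorm_eq_norm, opNorm_eq_norm, ← Matrix.conjTranspose_eq_transpose_of_trivial,
    Matrix.l2_opNorm_conjTranspose]

lemma l2norm_mulVec_le (A : Matrix α β ℝ) (v : β → ℝ) :
    l2norm (A *ᵥ v) ≤ opNorm A * l2norm v := by
  rw [l2norm_eq_norm_toLp, l2norm_eq_norm_toLp, opNorm_eq_norm]
  exact A.l2_opNorm_mulVec (WithLp.toLp 2 v)

lemma opNorm_mul_le_of_transpose_mul_self_eq_one [DecidableEq γ] (A : Matrix α β ℝ)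
    {P : Matrix β γ ℝ} (hP : Pᵀ * P = 1) : opNorm (A * P) ≤ opNorm A := by
  have hsq : ‖P‖ * ‖P‖ ≤ 1 := by
    rw [← Matrix.l2_opNorm_conjTranspose_mul_self, Matrix.conjTranspose_eq_transpose_of_trivial,
      hP, ← Matrix.diagonal_one, Matrix.l2_opNorm_diagonal]
    exact (pi_norm_const_le (1 : ℝ)).trans_eq norm_one
  rw [opNorm_eq_norm, opNorm_eq_norm]
  calc ‖A * P‖ ≤ ‖A‖ * ‖P‖ := A.l2_opNorm_mul P
    _ ≤ ‖A‖ := mul_le_of_le_one_right (norm_nonneg A) (by nlinarith [norm_nonneg P])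

end EuclideanNorm

section VectorSoftThreshold

variable {lam : ℝ} {n k : ℕ}

lemma continuous_softvec (hlam : 0 ≤ lam) :
    Continuous (softvec lam : (Fin n → ℝ) → Fin n → ℝ) :=
  continuous_pi fun i => (continuous_soft hlam).comp (continuous_apply i)

lemma l2norm_softvec_sub_softvec_le (hlam : 0 ≤ lam) (u v : Fin n → ℝ) :
    l2norm (softvec lam u - softvec lam v) ≤ l2norm (u - v) :=
  Real.sqrt_le_sqrt <| Finset.sum_le_sum fun i _ =>
    sq_le_sq.2 (abs_soft_sub_soft_le hlam (u i) (v i))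

lemma neg_half_l2sq_softvec_le (hlam : 0 ≤ lam) (u x : Fin n → ℝ) :
    -(l2sq (softvec lam u) / 2) ≤ l2sq x / 2 - dotp x u + lam * l1norm x := by
  simp only [l2sq, dotp, l1norm, Finset.sum_div, Finset.mul_sum, ← Finset.sum_neg_distrib,
    ← Finset.sum_sub_distrib, ← Finset.sum_add_distrib]
  exact Finset.sum_le_sum fun i _ => neg_half_sq_soft_le hlam (u i) (x i)

lemma half_l2sq_softvec_sub_add_eq (lam : ℝ) (u : Fin n → ℝ) :
    l2sq (softvec lam u) / 2 - dotp (softvec lam u) u + lam * l1norm (softvec lam u) =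
      -(l2sq (softvec lam u) / 2) := by
  simp only [l2sq, dotp, l1norm, Finset.sum_div, Finset.mul_sum, ← Finset.sum_neg_distrib,
    ← Finset.sum_sub_distrib, ← Finset.sum_add_distrib]
  exact Finset.sum_congr rfl fun i _ => half_sq_soft_sub_add_eq lam (u i)

lemma hasFDerivAt_half_l2sq_softvec (hlam : 0 ≤ lam) (u : Fin n → ℝ) :
    HasFDerivAt (fun v => l2sq (softvec lam v) / 2) (dotCLM (softvec lam u)) u := by
  have hcoord (i : Fin n) := (hasDerivAt_half_sq_soft hlam (u i)).comp_hasFDerivAt u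
    (hasFDerivAt_apply (𝕜 := ℝ) i u)
  simp only [l2sq, Finset.sum_div]
  refine (HasFDerivAt.fun_sum fun i _ => hcoord i).congr_fderiv ?_
  ext v
  simp [dotCLM_apply, dotProduct, softvec]

lemma l2norm_transpose_mulVec_softvec_sub_le (hlam : 0 ≤ lam) (B : Matrix (Fin n) (Fin k) ℝ)
    (a b : Fin k → ℝ) :
    l2norm (Bᵀ *ᵥ softvec lam (B *ᵥ a) - Bᵀ *ᵥ softvec lam (B *ᵥ b)) ≤
      opNorm B ^ 2 * l2norm (a - b) :=
  calc l2norm (Bᵀ *ᵥ softvec lam (B *ᵥ a) - Bᵀ *ᵥ softvec lam (B *ᵥ b))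
      ≤ opNorm Bᵀ * l2norm (softvec lam (B *ᵥ a) - softvec lam (B *ᵥ b)) := by
        rw [← Matrix.mulVec_sub]
        exact l2norm_mulVec_le _ _
    _ ≤ opNorm Bᵀ * l2norm (B *ᵥ (a - b)) := by
        rw [Matrix.mulVec_sub]
        exact mul_le_mul_of_nonneg_left (l2norm_softvec_sub_softvec_le hlam _ _) (opNorm_nonneg _)
    _ ≤ opNorm Bᵀ * (opNorm B * l2norm (a - b)) :=
        mul_le_mul_of_nonneg_left (l2norm_mulVec_le B _) (opNorm_nonneg _)
    _ = opNorm B ^ 2 * l2norm (a - b) := by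
        rw [opNorm_transpose]
        ring

end VectorSoftThreshold

section Padding

variable {k m : ℕ}

lemma padM_mulVec (a : Fin k → ℝ) : padM k m *ᵥ a = pad k m a := by
  ext i
  by_cases hi : (i : ℕ) < k
  · have heq (j : Fin k) : (i : ℕ) = j ↔ ⟨i, hi⟩ = j := by simp [Fin.ext_iff]
    simp [padM, pad, Matrix.mulVec, dotProduct, hi, heq]
  · have hne (j : Fin k) : (i : ℕ) ≠ j := by omega
    simp [padM, pad, Matrix.mulVec, dotProduct, hi, hne]

lemma padM_transpose_mulVec (hkm : k ≤ m) (v : Fin m → ℝ) : (padM k m)ᵀ *ᵥ v = unpad hkm v := by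
  ext j
  have heq (i : Fin m) : (i : ℕ) = j ↔ i = Fin.castLE hkm j := by simp [Fin.ext_iff]
  simp [padM, unpad, Matrix.mulVec, dotProduct, heq]

lemma padM_transpose_mul_padM (hkm : k ≤ m) : (padM k m)ᵀ * padM k m = 1 := by
  refine Matrix.mulVec_injective (funext fun a => ?_)
  rw [← Matrix.mulVec_mulVec, padM_mulVec, padM_transpose_mulVec hkm, Matrix.one_mulVec]
  ext j
  simp [unpad, pad]

end Padding

section CyclicCorrelation

variable {k m : ℕ} [NeZero m]

open scoped Fin.CommRing in
lemma idx_eq_intCast (t : ℤ) : idx m t = (t : Fin m) :=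
  Fin.ext (Fin.val_intCast t).symm

open scoped Fin.CommRing in
lemma circ_apply (w : Fin m → ℝ) (i j : Fin m) : circ w i j = w (i - j) := by
  simp [circ, cshift, idx_eq_intCast]

open scoped Fin.CommRing in
lemma rcirc_apply (a0 : Fin k → ℝ) (i j : Fin m) : rcirc k m a0 i j = pad k m a0 (i + j) := by
  simp [rcirc, cshift, idx_eq_intCast]

lemma circ_transpose_mulVec_pad (w : Fin m → ℝ) (a0 : Fin k → ℝ) :
    (circ w)ᵀ *ᵥ pad k m a0 = (rcirc k m a0)ᵀ *ᵥ w := by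
  ext j
  simp only [Matrix.mulVec, dotProduct, Matrix.transpose_apply, circ_apply, rcirc_apply]
  rw [← Equiv.sum_comp (Equiv.addRight j)]
  simp [mul_comm]

lemma dotp_conv_pad (w x : Fin m → ℝ) (a0 : Fin k → ℝ) :
    dotp (conv w x) (pad k m a0) = dotp x ((rcirc k m a0)ᵀ *ᵥ w) :=
  calc dotp (conv w x) (pad k m a0) = (circ w *ᵥ x) ⬝ᵥ pad k m a0 := rfl
    _ = x ⬝ᵥ ((circ w)ᵀ *ᵥ pad k m a0) := by
      rw [Matrix.mulVec_transpose, dotProduct_comm, Matrix.dotProduct_mulVec, dotProduct_comm]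
    _ = x ⬝ᵥ ((rcirc k m a0)ᵀ *ᵥ w) := by rw [circ_transpose_mulVec_pad]

/-- The matrix `B = (Č_{a0})* ι` of the map sending `a` to its cyclic cross-correlation with `a0`;
`φ̂` depends on `a` only through `B a`. -/
def correlationMatrix (k m : ℕ) [NeZero m] (a0 : Fin k → ℝ) : Matrix (Fin m) (Fin k) ℝ :=
  (rcirc k m a0)ᵀ * padM k m

lemma correlationMatrix_mulVec (a0 a : Fin k → ℝ) :
    correlationMatrix k m a0 *ᵥ a = (rcirc k m a0)ᵀ *ᵥ pad k m a := by
  rw [correlationMatrix, ← Matrix.mulVec_mulVec, padM_mulVec]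

lemma correlationMatrix_transpose_mulVec (hkm : k ≤ m) (a0 : Fin k → ℝ) (u : Fin m → ℝ) :
    (correlationMatrix k m a0)ᵀ *ᵥ u = unpad hkm (rcirc k m a0 *ᵥ u) := by
  rw [correlationMatrix, Matrix.transpose_mul, Matrix.transpose_transpose, ← Matrix.mulVec_mulVec,
    padM_transpose_mulVec hkm]

lemma opNorm_correlationMatrix_le (hkm : k ≤ m) (a0 : Fin k → ℝ) :
    opNorm (correlationMatrix k m a0) ≤ opNorm (rcirc k m a0) :=
  (opNorm_mul_le_of_transpose_mul_self_eq_one _ (padM_transpose_mul_padM hkm)).trans_eq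
    (opNorm_transpose _)

lemma phiHatInner_eq (lam : ℝ) (a0 a : Fin k → ℝ) (x : Fin m → ℝ) :
    phiHatInner k m lam a0 a x = l2sq (pad k m a0) / 2 +
      (l2sq x / 2 - dotp x (correlationMatrix k m a0 *ᵥ a) + lam * l1norm x) := by
  rw [phiHatInner, dotp_conv_pad, correlationMatrix_mulVec]
  ring

lemma phiHat_eq {lam : ℝ} (hlam : 0 ≤ lam) (a0 a : Fin k → ℝ) :
    phiHat k m lam a0 a = l2sq (pad k m a0) / 2 -
      l2sq (softvec lam (correlationMatrix k m a0 *ᵥ a)) / 2 := by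
  refine IsLeast.csInf_eq ⟨⟨softvec lam (correlationMatrix k m a0 *ᵥ a), ?_⟩, ?_⟩
  · rw [phiHatInner_eq, half_l2sq_softvec_sub_add_eq, sub_eq_add_neg]
  · rintro _ ⟨x, rfl⟩
    rw [phiHatInner_eq, sub_eq_add_neg]
    gcongr
    exact neg_half_l2sq_softvec_le hlam _ x

lemma hasFDerivAt_phiHat {lam : ℝ} (hlam : 0 ≤ lam) (a0 a : Fin k → ℝ) :
    HasFDerivAt (phiHat k m lam a0) (dotCLM (-((correlationMatrix k m a0)ᵀ *ᵥ
      softvec lam (correlationMatrix k m a0 *ᵥ a)))) a := by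
  rw [funext (phiHat_eq hlam a0), dotCLM_neg]
  exact (hasFDerivAt_comp_mulVec _ (hasFDerivAt_half_l2sq_softvec hlam _)).const_sub _

end CyclicCorrelation

/-- `φ̂` is continuously differentiable with gradient
`∇φ̂(a) = −ι* Č_{a0} S_λ((Č_{a0})* ι a)`, and this gradient map is Lipschitz with
constant `‖Č_{a0}‖_op²`. -/
theorem stmt_5 {k m : ℕ} [NeZero m] (hkm : k ≤ m) (lam : ℝ) (hlam : 0 < lam)
    (a0 : Fin k → ℝ) :
    let gr : (Fin k → ℝ) → Fin k → ℝ := fun a =>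
      -unpad hkm ((rcirc k m a0).mulVec (softvec lam (((rcirc k m a0)ᵀ).mulVec (pad k m a))))
    ContDiff ℝ 1 (phiHat k m lam a0) ∧
    (∀ a : Fin k → ℝ, HasFDerivAt (phiHat k m lam a0) (dotCLM (gr a)) a) ∧
    (∀ a b : Fin k → ℝ, l2norm (gr a - gr b) ≤ opNorm (rcirc k m a0) ^ 2 * l2norm (a - b)) := by
  intro gr
  set B := correlationMatrix k m a0
  have hgr : gr = fun a => -(Bᵀ *ᵥ softvec lam (B *ᵥ a)) := by
    simp only [gr, B, correlationMatrix_transpose_mulVec hkm, correlationMatrix_mulVec]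
  have hderiv (a : Fin k → ℝ) : HasFDerivAt (phiHat k m lam a0) (dotCLM (gr a)) a :=
    hgr ▸ hasFDerivAt_phiHat hlam.le a0 a
  have hcont : Continuous gr := by
    have hsoft := continuous_softvec (n := m) hlam.le
    rw [hgr]
    fun_prop
  refine ⟨contDiff_one_of_hasFDerivAt_dotCLM hcont hderiv, hderiv, fun a b => ?_⟩
  calc l2norm (gr a - gr b) ≤ opNorm B ^ 2 * l2norm (a - b) := by
        rw [hgr, neg_sub_neg, l2norm_sub_comm a b]
        exact l2norm_transpose_mulVec_softvec_sub_le hlam.le B b a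
    _ ≤ opNorm (rcirc k m a0) ^ 2 * l2norm (a - b) :=
        mul_le_mul_of_nonneg_right
          (pow_le_pow_left₀ (opNorm_nonneg B) (opNorm_correlationMatrix_le hkm a0) 2)
          (Real.sqrt_nonneg _)

end
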